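/- arXiv:2208.04850 — 2 statements merged into one kernel-verified Lean document; each statement's English description precedes it below -/
import Mathlib

section
/- Let d ≥ 1, let w : ℝ × ℝ^d → ℝ^d be continuously differentiable with bounded spatial derivative, and let Φ : ℝ × ℝ^d → ℝ^d be a flow of w, i.e. Φ(0,x) = x and ∂_t Φ(t,x) = w(t,Φ(t,x)) for all (t,x). Assume each Φ(t,·) is injective and continuously differentiable, the spatial Jacobian matrix DΦ(t,x) is continuous in (t,x), satisfies det DΦ(t,x) > 0, and for each x the map t ↦ DΦ(t,x) is differentiable with ∂_t DΦ(t,x) = D_x w(t,Φ(t,x)) · DΦ(t,x). Let Ω₀ ⊆ ℝ^d be a bounded measurable set and set Ω(t) := Φ(t,·) '' Ω₀. Then for every g : ℝ × ℝ^d → ℝ of class C¹ with g, ∂_t g and the spatial gradient ∇g bounded, the function t ↦ ∫_{Ω(t)} g(t,y) dy is differentiable and (d/dt) ∫_{Ω(t)} g(t,y) dy = ∫_{Ω(t)} [ ∂_t g(t,y) + w(t,y)·∇g(t,y) + g(t,y) (div_y w)(t,y) ] dy. -/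
open MeasureTheory RealInnerProductSpace

/-!
The change of variables `y = Φ s x` turns the integral over the moving domain into
`∫ x in Ω₀, |det DΦ s x| • g (s, Φ s x)`, whose domain is fixed. By Jacobi's formula the variational
equation gives `∂ₛ det DΦ = (div w) det DΦ`, and a linear equation `f' = c f` is inherited by `‖f‖`,
here by `|det DΦ|`. The chain rule gives the material derivative of `g` along trajectories.
Differentiating under the integral sign, where the dominating constant comes from continuity on the
compact closure of `Ω₀`, and changing variables back concludes.
-/

open Filter Metric Set
open scoped Topology

section Determinant

variable {𝕜 E : Type*} [NontriviallyNormedField 𝕜] [NormedAddCommGroup E] [NormedSpace 𝕜 E]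
  [FiniteDimensional 𝕜 E]

theorem hasDerivAt_det_one_add_smul (B : E →L[𝕜] E) :
    HasDerivAt (fun r : 𝕜 => (1 + r • B).det) (LinearMap.trace 𝕜 E B) 0 := by
  let b := Module.finBasis 𝕜 E
  let M := LinearMap.toMatrix b b B
  obtain ⟨p, hp⟩ : ∃ p : Polynomial 𝕜, ∀ r : 𝕜,
      (1 + r • M).det = 1 + M.trace * r + p.eval r * r ^ 2 :=
    ⟨_, fun r => Matrix.det_one_add_smul r M⟩
  have det_eq (r : 𝕜) : (1 + r • B).det = 1 + M.trace * r + p.eval r * r ^ 2 := by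
    rw [← hp, ← LinearMap.toMatrix_one b, ← map_smul, ← map_add, LinearMap.det_toMatrix]
    rfl
  rw [funext det_eq, LinearMap.trace_eq_matrix_trace 𝕜 b]
  change HasDerivAt _ M.trace 0
  simpa using (((hasDerivAt_id' (0 : 𝕜)).const_mul M.trace).const_add 1).fun_add
    ((p.hasDerivAt 0).fun_mul (hasDerivAt_pow 2 (0 : 𝕜)))

variable [CompleteSpace 𝕜]

theorem differentiable_det : Differentiable 𝕜 (ContinuousLinearMap.det : (E →L[𝕜] E) → 𝕜) := by
  let b := Module.finBasis 𝕜 E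
  let coord i : E →L[𝕜] 𝕜 := (b.coord i).toContinuousLinearMap
  have det_eq_sum : (ContinuousLinearMap.det : (E →L[𝕜] E) → 𝕜) =
      fun A => ∑ σ : Equiv.Perm _, Equiv.Perm.sign σ • ∏ i, coord (σ i) (A (b i)) := by
    ext A
    rw [ContinuousLinearMap.det, ← LinearMap.det_toMatrix b, Matrix.det_apply]
    simp only [LinearMap.toMatrix_apply]
    rfl
  rw [det_eq_sum]
  fun_prop

theorem fderiv_det_apply_comp (A B : E →L[𝕜] E) :
    fderiv 𝕜 ContinuousLinearMap.det A (B ∘L A) = LinearMap.trace 𝕜 E B * A.det := by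
  have along_line : HasDerivAt (fun r : 𝕜 => (A + r • B ∘L A).det)
      (fderiv 𝕜 ContinuousLinearMap.det A (B ∘L A)) 0 :=
    (differentiable_det A).hasFDerivAt.hasLineDerivAt (B ∘L A)
  have det_factor (r : 𝕜) : (A + r • B ∘L A).det = (1 + r • B).det * A.det :=
    LinearMap.det_comp ((1 + r • B : E →L[𝕜] E) : E →ₗ[𝕜] E) A
  simp only [det_factor] at along_line
  exact along_line.unique ((hasDerivAt_det_one_add_smul B).mul_const A.det)

theorem hasDerivAt_det_of_hasDerivAt_comp {A : 𝕜 → E →L[𝕜] E} {B : E →L[𝕜] E} {t : 𝕜}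
    (hA : HasDerivAt A (B ∘L A t) t) :
    HasDerivAt (fun s => (A s).det) (LinearMap.trace 𝕜 E B * (A t).det) t := by
  rw [← fderiv_det_apply_comp]
  exact (differentiable_det (A t)).hasFDerivAt.comp_hasDerivAt t hA

end Determinant

theorem hasDerivAt_norm_of_hasDerivAt_smul {F : Type*} [NormedAddCommGroup F] [NormedSpace ℝ F]
    {f : ℝ → F} {c t : ℝ} (hf : HasDerivAt f (c • f t) t) :
    HasDerivAt (fun s => ‖f s‖) (c * ‖f t‖) t := by
  have factor_pos : ∀ᶠ s in 𝓝 t, 0 < 1 + (s - t) * c :=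
    (by fun_prop : Continuous fun s : ℝ => 1 + (s - t) * c).continuousAt.eventually_const_lt
      (by simp)
  rw [hasDerivAt_iff_isLittleO] at hf ⊢
  refine (Asymptotics.IsBigO.of_norm_eventuallyLE ?_).trans_isLittleO hf.norm_left
  filter_upwards [factor_pos] with s hs
  calc ‖‖f s‖ - ‖f t‖ - (s - t) • (c * ‖f t‖)‖
      = |‖f s‖ - ‖(1 + (s - t) * c) • f t‖| := by
        rw [norm_smul, Real.norm_of_nonneg hs.le, Real.norm_eq_abs, smul_eq_mul]
        ring_nf
    _ ≤ ‖f s - (1 + (s - t) * c) • f t‖ := abs_norm_sub_norm_le _ _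
    _ = ‖f s - f t - (s - t) • c • f t‖ := by
        rw [add_smul, one_smul, mul_smul, sub_add_eq_sub_sub]

theorem continuous_prod_of_continuous_hasFDerivAt {𝕜 α E F : Type*} [RCLike 𝕜]
    [TopologicalSpace α] [NormedAddCommGroup E] [NormedSpace 𝕜 E] [NormedAddCommGroup F]
    [NormedSpace 𝕜 F] {f : α → E → F} {f' : α → E → E →L[𝕜] F}
    (hf : ∀ x, Continuous fun a => f a x) (hf' : ∀ a x, HasFDerivAt (f a) (f' a x) x)
    (hf'_cont : Continuous fun p : α × E => f' p.1 p.2) :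
    Continuous fun p : α × E => f p.1 p.2 := by
  rw [continuous_iff_continuousAt]
  rintro ⟨a, x⟩
  let C := ‖f' a x‖₊ + 1
  have bound_near : ∀ᶠ p : α × E in 𝓝 (a, x), ‖f' p.1 p.2‖₊ < C :=
    hf'_cont.nnnorm.continuousAt.eventually_lt_const (lt_add_one _)
  obtain ⟨U, hU, V, hV, hUV⟩ := mem_nhds_prod_iff.1 bound_near
  obtain ⟨r, hr, hrV⟩ := Metric.mem_nhds_iff.1 hV
  let : NormedSpace ℝ E := NormedSpace.restrictScalars ℝ 𝕜 E
  have lipschitz (b : α) (hb : b ∈ U) : LipschitzOnWith C (f b) (ball x r) :=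
    (convex_ball x r).lipschitzOnWith_of_nnnorm_hasFDerivWithin_le
      (fun y _ => (hf' b y).hasFDerivWithinAt)
      fun y hy => le_of_lt (hUV (mk_mem_prod hb (hrV hy)))
  exact (continuousOn_prod_of_continuousOn_lipschitzOnWith' (fun p : α × E => f p.1 p.2) C lipschitz
    fun y _ => (hf y).continuousOn).continuousAt (prod_mem_nhds hU (ball_mem_nhds x hr))

theorem hasDerivAt_setIntegral_of_continuousOn_deriv {𝕜 X F : Type*} [RCLike 𝕜]
    [TopologicalSpace X] [T2Space X] [MeasurableSpace X] [OpensMeasurableSpace X]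
    [NormedAddCommGroup F] [NormedSpace ℝ F] [NormedSpace 𝕜 F] {μ : Measure X}
    [IsFiniteMeasureOnCompacts μ] {f f' : 𝕜 → X → F} {K S : Set X} (hK : IsCompact K) (hSK : S ⊆ K)
    (hf : ∀ t, ContinuousOn (f t) K)
    (hf'_cont : ContinuousOn (fun p : 𝕜 × X => f' p.1 p.2) (univ ×ˢ K))
    (hf' : ∀ t, ∀ x ∈ K, HasDerivAt (fun s => f s x) (f' t x) t) (t : 𝕜) :
    HasDerivAt (fun s => ∫ x in S, f s x ∂μ) (∫ x in S, f' t x ∂μ) t := by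
  obtain ⟨C, hC⟩ := ((isCompact_closedBall t 1).prod hK).exists_bound_of_continuousOn
    (hf'_cont.mono (prod_mono_left (subset_univ _)))
  have f_integrable (s : 𝕜) : IntegrableOn (f s) S μ :=
    ((hf s).integrableOn_compact hK).mono_set hSK
  have f'_slice_cont : ContinuousOn (f' t) K :=
    hf'_cont.comp (Continuous.prodMk_right t).continuousOn fun x hx => ⟨mem_univ t, hx⟩
  have f'_integrable : IntegrableOn (f' t) S μ :=
    (f'_slice_cont.integrableOn_compact hK).mono_set hSK
  have ae_mem : ∀ᵐ x ∂μ.restrict S, x ∈ K :=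
    ae_restrict_of_ae_restrict_of_subset hSK (ae_restrict_mem hK.measurableSet)
  exact (hasDerivAt_integral_of_dominated_loc_of_deriv_le (closedBall_mem_nhds t one_pos)
    (.of_forall fun s => (f_integrable s).aestronglyMeasurable) (f_integrable t)
    f'_integrable.aestronglyMeasurable
    (ae_mem.mono fun x hx s hs => hC (s, x) ⟨hs, hx⟩)
    (integrableOn_const (measure_ne_top_of_subset hSK hK.measure_ne_top))
    (ae_mem.mono fun x hx s _ => hf' s x hx)).2

section Fields

variable {E F : Type*} [NormedAddCommGroup E] [NormedSpace ℝ E] [NormedAddCommGroup F]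
  [NormedSpace ℝ F]

/-- The divergence of a vector field, as the trace of its derivative; this makes sense without
coordinates. It is `0` where the field is not differentiable. -/
noncomputable def divergence (v : E → E) (x : E) : ℝ :=
  LinearMap.trace ℝ E (fderiv ℝ v x).toLinearMap

/-- The material derivative `∂ₜ g + (w · ∇) g` of a time-dependent quantity `g` transported by the
time-dependent velocity field `w`, with `w · ∇ g` encoded as the spatial derivative of `g` in the
direction `w`. -/
noncomputable def materialDeriv (w : ℝ × E → E) (g : ℝ × E → F) (t : ℝ) (y : E) : F :=
  deriv (fun s => g (s, y)) t + fderiv ℝ (fun z => g (t, z)) y (w (t, y))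

theorem continuous_divergence [FiniteDimensional ℝ E] {w : ℝ × E → E} (hw : ContDiff ℝ 1 w) :
    Continuous fun p : ℝ × E => divergence (fun z => w (p.1, z)) p.2 := by
  have trace_cont : Continuous fun A : E →L[ℝ] E => LinearMap.trace ℝ E A.toLinearMap :=
    (LinearMap.trace ℝ E ∘ₗ ContinuousLinearMap.coeLM ℝ).continuous_of_finiteDimensional
  have fderiv_cont : Continuous fun p : ℝ × E => fderiv ℝ (fun z => w (p.1, z)) p.2 :=
    (ContDiff.fderiv (n := 0) (f := fun (p : ℝ × E) z => w (p.1, z)) (by fun_prop) contDiff_snd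
      (by simp)).continuous
  exact trace_cont.comp fderiv_cont

theorem materialDeriv_eq_fderiv (w : ℝ × E → E) {g : ℝ × E → F} {t : ℝ} {y : E}
    (hg : DifferentiableAt ℝ g (t, y)) :
    materialDeriv w g t y = fderiv ℝ g (t, y) (1, w (t, y)) := by
  have time_deriv : deriv (fun s => g (s, y)) t = fderiv ℝ g (t, y) (1, 0) :=
    (hg.hasFDerivAt.comp_hasDerivAt t ((hasDerivAt_id t).prodMk (hasDerivAt_const t y))).deriv
  have space_fderiv : fderiv ℝ (fun z => g (t, z)) y = fderiv ℝ g (t, y) ∘L .inr ℝ ℝ E :=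
    (hg.hasFDerivAt.comp y (hasFDerivAt_prodMk_right t y)).fderiv
  simp [materialDeriv, time_deriv, space_fderiv, ← map_add]

theorem continuous_materialDeriv {w : ℝ × E → E} {g : ℝ × E → F} (hw : Continuous w)
    (hg : ContDiff ℝ 1 g) : Continuous fun p : ℝ × E => materialDeriv w g p.1 p.2 := by
  simp only [fun p : ℝ × E => materialDeriv_eq_fderiv w (hg.differentiable one_ne_zero (p.1, p.2))]
  exact (hg.continuous_fderiv one_ne_zero).clm_apply (by fun_prop)

theorem hasDerivAt_comp_trajectory {w : ℝ × E → E} {g : ℝ × E → F} {γ : ℝ → E} {t : ℝ}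
    (hγ : HasDerivAt γ (w (t, γ t)) t) (hg : DifferentiableAt ℝ g (t, γ t)) :
    HasDerivAt (fun s => g (s, γ s)) (materialDeriv w g t (γ t)) t := by
  rw [materialDeriv_eq_fderiv w hg]
  exact hg.hasFDerivAt.comp_hasDerivAt t ((hasDerivAt_id t).prodMk hγ)

theorem hasDerivAt_abs_det_smul_comp_trajectory [FiniteDimensional ℝ E] {w : ℝ × E → E}
    {g : ℝ × E → F} {γ : ℝ → E} {A : ℝ → E →L[ℝ] E} {t : ℝ} (hγ : HasDerivAt γ (w (t, γ t)) t)
    (hA : HasDerivAt A (fderiv ℝ (fun z => w (t, z)) (γ t) ∘L A t) t)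
    (hg : DifferentiableAt ℝ g (t, γ t)) :
    HasDerivAt (fun s => |(A s).det| • g (s, γ s))
      (|(A t).det| •
        (materialDeriv w g t (γ t) + divergence (fun z => w (t, z)) (γ t) • g (t, γ t))) t := by
  have abs_det_deriv : HasDerivAt (fun s => |(A s).det|)
      (divergence (fun z => w (t, z)) (γ t) * |(A t).det|) t :=
    hasDerivAt_norm_of_hasDerivAt_smul (hasDerivAt_det_of_hasDerivAt_comp hA)
  refine (abs_det_deriv.fun_smul (hasDerivAt_comp_trajectory hγ hg)).congr_deriv ?_
  rw [smul_add, smul_smul, mul_comm]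

theorem reynolds_transport_theorem_general [FiniteDimensional ℝ E] [MeasurableSpace E]
    [BorelSpace E] (μ : Measure E) [μ.IsAddHaarMeasure] {w : ℝ × E → E} (hw : ContDiff ℝ 1 w)
    {Φ : ℝ → E → E} (hΦ' : ∀ t x, HasDerivAt (fun s => Φ s x) (w (t, Φ t x)) t)
    {DΦ : ℝ → E → E →L[ℝ] E} (hDΦ : ∀ t x, HasFDerivAt (Φ t) (DΦ t x) x)
    (hDΦcont : Continuous fun p : ℝ × E => DΦ p.1 p.2)
    (hDΦ' : ∀ t x,
      HasDerivAt (fun s => DΦ s x) (fderiv ℝ (fun z => w (t, z)) (Φ t x) ∘L DΦ t x) t)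
    {Ω₀ : Set E} (hΩ₀meas : MeasurableSet Ω₀) (hΩ₀bdd : Bornology.IsBounded Ω₀)
    (hΦinj : ∀ t, InjOn (Φ t) Ω₀) {g : ℝ × E → F} (hg : ContDiff ℝ 1 g) (t : ℝ) :
    HasDerivAt (fun s => ∫ y in Φ s '' Ω₀, g (s, y) ∂μ)
      (∫ y in Φ t '' Ω₀,
        (materialDeriv w g t y + divergence (fun z => w (t, z)) y • g (t, y)) ∂μ) t := by
  have change_of_variables (s : ℝ) (f : E → F) :
      ∫ y in Φ s '' Ω₀, f y ∂μ = ∫ x in Ω₀, |(DΦ s x).det| • f (Φ s x) ∂μ :=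
    integral_image_eq_integral_abs_det_fderiv_smul μ hΩ₀meas
      (fun x _ => (hDΦ s x).hasFDerivWithinAt) (hΦinj s) f
  simp only [change_of_variables]
  have space_time_cont : Continuous fun p : ℝ × E => (p.1, Φ p.1 p.2) :=
    continuous_fst.prodMk <| continuous_prod_of_continuous_hasFDerivAt
      (fun x => continuous_iff_continuousAt.2 fun s => (hΦ' s x).continuousAt) hDΦ hDΦcont
  have abs_det_cont : Continuous fun p : ℝ × E => |(DΦ p.1 p.2).det| :=
    (ContinuousLinearMap.continuous_det.comp hDΦcont).abs
  have integrand_cont : Continuous fun p : ℝ × E => |(DΦ p.1 p.2).det| • g (p.1, Φ p.1 p.2) :=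
    abs_det_cont.smul (hg.continuous.comp space_time_cont)
  have source_cont : Continuous fun p : ℝ × E =>
      materialDeriv w g p.1 p.2 + divergence (fun z => w (p.1, z)) p.2 • g p :=
    (continuous_materialDeriv hw.continuous hg).add ((continuous_divergence hw).smul hg.continuous)
  exact hasDerivAt_setIntegral_of_continuousOn_deriv hΩ₀bdd.isCompact_closure subset_closure
    (fun s => (integrand_cont.comp (Continuous.prodMk_right s)).continuousOn)
    (abs_det_cont.smul (source_cont.comp space_time_cont)).continuousOn
    (fun s x _ => hasDerivAt_abs_det_smul_comp_trajectory (hΦ' s x) (hDΦ' s x)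
      (hg.differentiable one_ne_zero _)) t

end Fields

/-- **Reynolds transport theorem.** If `Φ` is a flow of a `C¹` velocity field `w` with
bounded spatial derivative, each `Φ t` is an injective `C¹` map with spatial Jacobian
`DΦ t x` continuous in `(t,x)`, of positive determinant, and satisfying the variational
equation `∂ₜ DΦ = D_x w (t, Φ) ∘ DΦ`, and `Ω₀` is a bounded measurable set transported to
`Ω(t) = Φ t '' Ω₀`, then for every `C¹` function `g` with `g`, `∂ₜ g` and `∇g` bounded,
`t ↦ ∫_{Ω(t)} g (t, y) dy` is differentiable with derivative
`∫_{Ω(t)} (∂ₜ g + w·∇g + g div w)`. -/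
theorem reynolds_transport_theorem (d : ℕ) (hd : 1 ≤ d)
    (w : ℝ × EuclideanSpace ℝ (Fin d) → EuclideanSpace ℝ (Fin d))
    (hw : ContDiff ℝ 1 w)
    (Cw : ℝ) (hwbdd : ∀ (t : ℝ) (y : EuclideanSpace ℝ (Fin d)),
      ‖fderiv ℝ (fun z => w (t, z)) y‖ ≤ Cw)
    (Φ : ℝ → EuclideanSpace ℝ (Fin d) → EuclideanSpace ℝ (Fin d))
    (hΦ0 : ∀ x, Φ 0 x = x)
    (hΦ' : ∀ t x, HasDerivAt (fun s => Φ s x) (w (t, Φ t x)) t)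
    (hΦinj : ∀ t, Function.Injective (Φ t))
    (hΦreg : ∀ t, ContDiff ℝ 1 (Φ t))
    (DΦ : ℝ → EuclideanSpace ℝ (Fin d) →
      (EuclideanSpace ℝ (Fin d) →L[ℝ] EuclideanSpace ℝ (Fin d)))
    (hDΦ : ∀ t x, HasFDerivAt (Φ t) (DΦ t x) x)
    (hDΦcont : Continuous (fun p : ℝ × EuclideanSpace ℝ (Fin d) => DΦ p.1 p.2))
    (hdet : ∀ t x, 0 < (DΦ t x).det)
    (hDΦ' : ∀ t x, HasDerivAt (fun s => DΦ s x)
      ((fderiv ℝ (fun z => w (t, z)) (Φ t x)).comp (DΦ t x)) t)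
    (Ω₀ : Set (EuclideanSpace ℝ (Fin d)))
    (hΩ₀meas : MeasurableSet Ω₀) (hΩ₀bdd : Bornology.IsBounded Ω₀)
    (g : ℝ × EuclideanSpace ℝ (Fin d) → ℝ)
    (hg : ContDiff ℝ 1 g)
    (Cg : ℝ)
    (hgbdd : ∀ p : ℝ × EuclideanSpace ℝ (Fin d),
      |g p| ≤ Cg ∧ |deriv (fun s => g (s, p.2)) p.1| ≤ Cg ∧
        ‖gradient (fun z => g (p.1, z)) p.2‖ ≤ Cg) :
    ∀ t : ℝ, HasDerivAt (fun s => ∫ y in Φ s '' Ω₀, g (s, y))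
      (∫ y in Φ t '' Ω₀,
        (deriv (fun s => g (s, y)) t
          + ⟪w (t, y), gradient (fun z => g (t, z)) y⟫
          + g (t, y) * LinearMap.trace ℝ (EuclideanSpace ℝ (Fin d))
              (fderiv ℝ (fun z => w (t, z)) y).toLinearMap)) t := by
  intro t
  simpa [materialDeriv, divergence, mul_comm] using reynolds_transport_theorem_general volume hw
    hΦ' hDΦ hDΦcont hDΦ' hΩ₀meas hΩ₀bdd (fun s => (hΦinj s).injOn) hg t
end

section
/- Let d ≥ 1, T > 0, let w : ℝ × ℝ^d → ℝ^d be continuously differentiable and let Φ : ℝ × ℝ^d → ℝ^d be a flow of w (Φ(0,x) = x and ∂_t Φ(t,x) = w(t,Φ(t,x))) whose spatial Jacobian matrix DΦ(t,x) is continuous in (t,x) and differentiable in t with ∂_t DΦ(t,x) = D_x w(t,Φ(t,x)) · DΦ(t,x). Assume there are constants C_w ≥ 0 and 0 < m₁ ≤ m₂ such that |div_y w(t,y)| ≤ C_w for all (t,y) and m₁ ≤ det DΦ(t,x) ≤ m₂ for all t ∈ [0,T] and x. Let Ω₀ ⊆ ℝ^d be measurable and u₀, v₀ ∈ L²(Ω₀).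 Then the function t ↦ ∫_{Ω₀} u₀(x) v₀(x) det DΦ(t,x) dx is differentiable on [0,T] with derivative ∫_{Ω₀} u₀(x) v₀(x) (div w)(t,Φ(t,x)) det DΦ(t,x) dx, and this derivative satisfies the uniform bound |(d/dt) ∫_{Ω₀} u₀ v₀ det DΦ(t,·)| ≤ C_w m₂ ‖u₀‖_{L²(Ω₀)} ‖v₀‖_{L²(Ω₀)}. -/
open MeasureTheory

/-!
Writing `A t x` for the Jacobian `DΦ(t,x)` and `B t x` for `D_x w(t,Φ(t,x))`, the only fact about
the flow that matters is the linear equation `∂ₜ A = B A`. Liouville's formula turns it into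
`∂ₜ det A = tr B · det A`, where `tr B` is the divergence of `w` along the flow. The bounds on
`tr B` and `det A` make `|u₀ v₀|` times a constant an integrable majorant of the difference
quotients (by the mean value inequality), so dominated convergence permits differentiation under
the integral sign, one-sidedly at the endpoints of the time interval, and Cauchy–Schwarz bounds
the resulting integral.
-/

open Filter Topology

section Liouville

theorem sum_det_updateRow_mul {R n : Type*} [CommRing R] [Fintype n] [DecidableEq n]
    (B M : Matrix n n R) :
    ∑ i, (M.updateRow i ((B * M) i)).det = B.trace * M.det := by
  rw [Matrix.trace, Finset.sum_mul]
  refine Finset.sum_congr rfl fun i _ => ?_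
  have row_eq : (B * M) i = ∑ k, B i k • M k := by
    ext j
    simp [Matrix.mul_apply]
  rw [row_eq, Matrix.det_updateRow_sum, smul_eq_mul, Matrix.diag_apply]

variable {𝕜 : Type*} [NontriviallyNormedField 𝕜] {s : Set 𝕜} {t : 𝕜}

theorem hasDerivWithinAt_matrix_det {n : Type*} [Fintype n] [DecidableEq n]
    {M : 𝕜 → Matrix n n 𝕜} {M' : Matrix n n 𝕜}
    (hM : ∀ i j, HasDerivWithinAt (fun r => M r i j) (M' i j) s t) :
    HasDerivWithinAt (fun r => (M r).det) (∑ i, ((M t).updateRow i (M' i)).det) s t := by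
  let rowDet : ContinuousMultilinearMap 𝕜 (fun _ : n => n → 𝕜) 𝕜 :=
    { toMultilinearMap := Matrix.detRowAlternating.toMultilinearMap
      cont := continuous_id.matrix_det }
  have hrows : HasDerivWithinAt (fun r i j => M r i j) (fun i j => M' i j) s t :=
    hasDerivWithinAt_pi.2 fun i => hasDerivWithinAt_pi.2 (hM i)
  exact ((rowDet.hasFDerivAt (M t)).comp_hasDerivWithinAt t hrows).congr_deriv
    (rowDet.linearDeriv_apply (M t) M')

variable [CompleteSpace 𝕜] {E : Type*} [NormedAddCommGroup E] [NormedSpace 𝕜 E]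
  [FiniteDimensional 𝕜 E]

theorem hasDerivWithinAt_clm_det_of_comp {A : 𝕜 → E →L[𝕜] E} {B : E →L[𝕜] E}
    (hA : HasDerivWithinAt A (B.comp (A t)) s t) :
    HasDerivWithinAt (fun r => (A r).det)
      (LinearMap.trace 𝕜 E B.toLinearMap * (A t).det) s t := by
  let b := Module.finBasis 𝕜 E
  have det_eq (L : E →L[𝕜] E) : L.det = (LinearMap.toMatrix b b L.toLinearMap).det :=
    (LinearMap.det_toMatrix b L.toLinearMap).symm
  have entry (i j) : HasDerivWithinAt (fun r => LinearMap.toMatrix b b (A r).toLinearMap i j)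
      (LinearMap.toMatrix b b (B.comp (A t)).toLinearMap i j) s t := by
    have happly : HasDerivWithinAt (fun r => A r (b j)) (B (A t (b j))) s t := by
      simpa using hA.clm_apply (hasDerivWithinAt_const t s (b j))
    simp only [LinearMap.toMatrix_apply]
    exact (b.coord i).toContinuousLinearMap.hasFDerivAt.comp_hasDerivWithinAt t happly
  simp only [det_eq]
  rw [LinearMap.trace_eq_matrix_trace 𝕜 b, ← sum_det_updateRow_mul, ← LinearMap.toMatrix_comp]
  exact hasDerivWithinAt_matrix_det entry

end Liouville

section IntegralDerivative

variable {𝕜 : Type*} [RCLike 𝕜] {G : Type*} [NormedAddCommGroup G] [NormedSpace 𝕜 G]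
  {s : Set 𝕜} {t : 𝕜}

theorem norm_slope_le_of_norm_hasDerivWithinAt_le {f f' : 𝕜 → G} {C : ℝ} {r : 𝕜}
    (hs : Convex ℝ s) (hf : ∀ q ∈ s, HasDerivWithinAt f (f' q) s q)
    (hbound : ∀ q ∈ s, ‖f' q‖ ≤ C) (ht : t ∈ s) (hr : r ∈ s) :
    ‖slope f t r‖ ≤ C := by
  have hC : 0 ≤ C := (norm_nonneg _).trans (hbound t ht)
  rw [slope_def_module, norm_smul, norm_inv, inv_mul_eq_div]
  exact div_le_of_le_mul₀ (norm_nonneg _) hC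
    (hs.norm_image_sub_le_of_norm_hasDerivWithin_le hf hbound ht hr)

variable [NormedSpace ℝ G] [SMulCommClass ℝ 𝕜 G]
  {α : Type*} [MeasurableSpace α] {μ : Measure α}

theorem slope_integral {F : 𝕜 → α → G} {r : 𝕜}
    (ht : Integrable (F t) μ) (hr : Integrable (F r) μ) :
    slope (fun q => ∫ x, F q x ∂μ) t r = ∫ x, slope (fun q => F q x) t r ∂μ := by
  simp only [slope_def_module]
  rw [integral_smul, integral_sub hr ht]

/-- `hasDerivAt_integral_of_dominated_loc_of_deriv_le` needs the bound on a neighbourhood of `t`,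
which is not available at the endpoints of an interval. -/
theorem hasDerivWithinAt_integral_of_dominated_of_convex {F F' : 𝕜 → α → G} {bound : α → ℝ}
    (hs : Convex ℝ s) (hF_int : ∀ q ∈ s, Integrable (F q) μ)
    (hF_deriv : ∀ᵐ x ∂μ, ∀ q ∈ s, HasDerivWithinAt (fun r => F r x) (F' q x) s q)
    (hF'_bound : ∀ᵐ x ∂μ, ∀ q ∈ s, ‖F' q x‖ ≤ bound x) (hbound : Integrable bound μ)
    (ht : t ∈ s) :
    HasDerivWithinAt (fun r => ∫ x, F r x ∂μ) (∫ x, F' t x ∂μ) s t := by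
  have eventually_mem : ∀ᶠ r in 𝓝[s \ {t}] t, r ∈ s :=
    eventually_mem_nhdsWithin.mono fun _ hr => hr.1
  have slope_tendsto : Tendsto (fun r => ∫ x, slope (fun q => F q x) t r ∂μ)
      (𝓝[s \ {t}] t) (𝓝 (∫ x, F' t x ∂μ)) := by
    refine tendsto_integral_filter_of_dominated_convergence bound ?_ ?_ hbound ?_
    · filter_upwards [eventually_mem] with r hr
      simp only [slope_def_module]
      exact (((hF_int r hr).sub (hF_int t ht)).smul (r - t)⁻¹).aestronglyMeasurable
    · filter_upwards [eventually_mem] with r hr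
      filter_upwards [hF_deriv, hF'_bound] with x hderiv hle
      exact norm_slope_le_of_norm_hasDerivWithinAt_le hs hderiv hle ht hr
    · filter_upwards [hF_deriv] with x hderiv
      exact hasDerivWithinAt_iff_tendsto_slope.1 (hderiv t ht)
  refine hasDerivWithinAt_iff_tendsto_slope.2 (slope_tendsto.congr' ?_)
  filter_upwards [eventually_mem] with r hr
  exact (slope_integral (hF_int t ht) (hF_int r hr)).symm

end IntegralDerivative

section CauchySchwarz

variable {α : Type*} [MeasurableSpace α] {μ : Measure α} {u v : α → ℝ}

theorem integral_abs_mul_le_sqrt_mul_sqrt (hu : MemLp u 2 μ) (hv : MemLp v 2 μ) :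
    ∫ x, |u x * v x| ∂μ ≤ √(∫ x, u x ^ 2 ∂μ) * √(∫ x, v x ^ 2 ∂μ) := by
  have holder := integral_mul_norm_le_Lp_mul_Lq Real.HolderConjugate.two_two
    (by simpa using hu) (by simpa using hv)
  simpa [abs_mul, Real.sqrt_eq_rpow] using holder

theorem abs_integral_mul_mul_le_of_abs_le {g : α → ℝ} {C : ℝ} (hu : MemLp u 2 μ) (hv : MemLp v 2 μ)
    (hg : ∀ᵐ x ∂μ, |g x| ≤ C) :
    |∫ x, u x * v x * g x ∂μ| ≤ C * (√(∫ x, u x ^ 2 ∂μ) * √(∫ x, v x ^ 2 ∂μ)) := by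
  rcases eq_zero_or_neZero μ with rfl | _
  · simp
  obtain ⟨x₀, hx₀⟩ := hg.exists
  have hC : 0 ≤ C := (abs_nonneg _).trans hx₀
  calc |∫ x, u x * v x * g x ∂μ|
      = ‖∫ x, u x * v x * g x ∂μ‖ := (Real.norm_eq_abs _).symm
    _ ≤ ∫ x, C * |u x * v x| ∂μ := by
        refine norm_integral_le_of_norm_le ((hu.integrable_mul hv).abs.const_mul C) ?_
        filter_upwards [hg] with x hx
        rw [norm_mul, Real.norm_eq_abs, Real.norm_eq_abs, mul_comm]
        exact mul_le_mul_of_nonneg_right hx (abs_nonneg _)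
    _ = C * ∫ x, |u x * v x| ∂μ := integral_const_mul C _
    _ ≤ C * (√(∫ x, u x ^ 2 ∂μ) * √(∫ x, v x ^ 2 ∂μ)) :=
        mul_le_mul_of_nonneg_left (integral_abs_mul_le_sqrt_mul_sqrt hu hv) hC

end CauchySchwarz

theorem transport_inner_product_differentiable_general
    {α : Type*} [MeasurableSpace α] {μ : Measure α}
    {E : Type*} [NormedAddCommGroup E] [NormedSpace ℝ E] [FiniteDimensional ℝ E]
    {I : Set ℝ} (hI : Convex ℝ I) {A B : ℝ → α → E →L[ℝ] E}
    (hA_meas : ∀ t ∈ I, AEStronglyMeasurable (fun x => (A t x).det) μ)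
    (hA : ∀ᵐ x ∂μ, ∀ t ∈ I, HasDerivWithinAt (fun s => A s x) ((B t x).comp (A t x)) I t)
    {C m : ℝ} (htrace : ∀ᵐ x ∂μ, ∀ t ∈ I, |LinearMap.trace ℝ E (B t x).toLinearMap| ≤ C)
    (hdet : ∀ᵐ x ∂μ, ∀ t ∈ I, |(A t x).det| ≤ m)
    {u v : α → ℝ} (hu : MemLp u 2 μ) (hv : MemLp v 2 μ) :
    ∀ t ∈ I,
      HasDerivWithinAt (fun s => ∫ x, u x * v x * (A s x).det ∂μ)
        (∫ x, u x * v x * LinearMap.trace ℝ E (B t x).toLinearMap * (A t x).det ∂μ) I t ∧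
      |∫ x, u x * v x * LinearMap.trace ℝ E (B t x).toLinearMap * (A t x).det ∂μ| ≤
        C * m * √(∫ x, u x ^ 2 ∂μ) * √(∫ x, v x ^ 2 ∂μ) := by
  have huv : Integrable (fun x => u x * v x) μ := hu.integrable_mul hv
  have det_deriv_le : ∀ᵐ x ∂μ, ∀ t ∈ I,
      |LinearMap.trace ℝ E (B t x).toLinearMap * (A t x).det| ≤ C * m := by
    filter_upwards [htrace, hdet] with x hxtrace hxdet t ht
    rw [abs_mul]
    exact mul_le_mul (hxtrace t ht) (hxdet t ht) (abs_nonneg _)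
      ((abs_nonneg _).trans (hxtrace t ht))
  have integrable_det : ∀ t ∈ I, Integrable (fun x => u x * v x * (A t x).det) μ :=
    fun t ht => huv.mul_bdd (hA_meas t ht) (hdet.mono fun x hx => hx t ht)
  have integrand_deriv : ∀ᵐ x ∂μ, ∀ t ∈ I,
      HasDerivWithinAt (fun s => u x * v x * (A s x).det)
        (u x * v x * (LinearMap.trace ℝ E (B t x).toLinearMap * (A t x).det)) I t := by
    filter_upwards [hA] with x hx t ht
    exact (hasDerivWithinAt_clm_det_of_comp (hx t ht)).const_mul (u x * v x)
  have integrand_deriv_le : ∀ᵐ x ∂μ, ∀ t ∈ I,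
      ‖u x * v x * (LinearMap.trace ℝ E (B t x).toLinearMap * (A t x).det)‖ ≤
        |u x * v x| * (C * m) := by
    filter_upwards [det_deriv_le] with x hx t ht
    rw [norm_mul, Real.norm_eq_abs]
    exact mul_le_mul_of_nonneg_left (hx t ht) (abs_nonneg _)
  intro t ht
  simp only [mul_assoc (u _ * v _), mul_assoc (C * m)]
  exact ⟨hasDerivWithinAt_integral_of_dominated_of_convex hI integrable_det integrand_deriv
      integrand_deriv_le (huv.abs.mul_const (C * m)) ht,
    abs_integral_mul_mul_le_of_abs_le hu hv (det_deriv_le.mono fun x hx => hx t ht)⟩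

/-- Differentiability of the pushed-forward `L²` inner product on a moving domain:
`t ↦ ∫_{Ω₀} u₀ v₀ det DΦ(t,·)` is differentiable with derivative
`∫_{Ω₀} u₀ v₀ (div w)(t, Φ(t,·)) det DΦ(t,·)`, and this derivative is bounded by
`C_w m₂ ‖u₀‖_{L²(Ω₀)} ‖v₀‖_{L²(Ω₀)}`. -/
theorem transport_inner_product_differentiable (d : ℕ) (hd : 1 ≤ d)
    (T : ℝ) (hT : 0 < T)
    (w : ℝ × EuclideanSpace ℝ (Fin d) → EuclideanSpace ℝ (Fin d))
    (hw : ContDiff ℝ 1 w)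
    (Φ : ℝ → EuclideanSpace ℝ (Fin d) → EuclideanSpace ℝ (Fin d))
    (hΦ0 : ∀ x, Φ 0 x = x)
    (hΦ' : ∀ t x, HasDerivAt (fun s => Φ s x) (w (t, Φ t x)) t)
    (DΦ : ℝ → EuclideanSpace ℝ (Fin d) →
      (EuclideanSpace ℝ (Fin d) →L[ℝ] EuclideanSpace ℝ (Fin d)))
    (hDΦ : ∀ t x, HasFDerivAt (Φ t) (DΦ t x) x)
    (hDΦcont : Continuous (fun p : ℝ × EuclideanSpace ℝ (Fin d) => DΦ p.1 p.2))
    (hDΦ' : ∀ t x, HasDerivAt (fun s => DΦ s x)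
      ((fderiv ℝ (fun z => w (t, z)) (Φ t x)).comp (DΦ t x)) t)
    (Cw m₁ m₂ : ℝ) (hCw : 0 ≤ Cw) (hm₁ : 0 < m₁) (hm₁₂ : m₁ ≤ m₂)
    (hdivbdd : ∀ (t : ℝ) (y : EuclideanSpace ℝ (Fin d)),
      |LinearMap.trace ℝ (EuclideanSpace ℝ (Fin d))
        (fderiv ℝ (fun z => w (t, z)) y).toLinearMap| ≤ Cw)
    (hdet : ∀ t ∈ Set.Icc (0:ℝ) T, ∀ x, m₁ ≤ (DΦ t x).det ∧ (DΦ t x).det ≤ m₂)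
    (Ω₀ : Set (EuclideanSpace ℝ (Fin d))) (hΩ₀ : MeasurableSet Ω₀)
    (u₀ v₀ : EuclideanSpace ℝ (Fin d) → ℝ)
    (hu₀ : MemLp u₀ 2 (volume.restrict Ω₀)) (hv₀ : MemLp v₀ 2 (volume.restrict Ω₀)) :
    ∀ t ∈ Set.Icc (0:ℝ) T,
      HasDerivWithinAt (fun s => ∫ x in Ω₀, u₀ x * v₀ x * (DΦ s x).det)
        (∫ x in Ω₀, u₀ x * v₀ x *
          (LinearMap.trace ℝ (EuclideanSpace ℝ (Fin d))
            (fderiv ℝ (fun z => w (t, z)) (Φ t x)).toLinearMap) * (DΦ t x).det)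
        (Set.Icc 0 T) t ∧
      |∫ x in Ω₀, u₀ x * v₀ x *
          (LinearMap.trace ℝ (EuclideanSpace ℝ (Fin d))
            (fderiv ℝ (fun z => w (t, z)) (Φ t x)).toLinearMap) * (DΦ t x).det| ≤
        Cw * m₂ * Real.sqrt (∫ x in Ω₀, (u₀ x) ^ 2) * Real.sqrt (∫ x in Ω₀, (v₀ x) ^ 2) := by
  have abs_det_le (x) (t) (ht : t ∈ Set.Icc 0 T) : |(DΦ t x).det| ≤ m₂ := by
    obtain ⟨hlower, hupper⟩ := hdet t ht x
    rwa [abs_of_pos (hm₁.trans_le hlower)]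
  have continuous_det (t) : Continuous fun x => (DΦ t x).det :=
    ContinuousLinearMap.continuous_det.comp (hDΦcont.comp (Continuous.prodMk_right t))
  exact transport_inner_product_differentiable_general (convex_Icc 0 T)
    (fun t _ => (continuous_det t).aestronglyMeasurable)
    (ae_of_all _ fun x t _ => (hDΦ' t x).hasDerivWithinAt)
    (ae_of_all _ fun x t _ => hdivbdd t (Φ t x)) (ae_of_all _ abs_det_le) hu₀ hv₀
end
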